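/- arXiv:0910.3118 — 3 statements merged into one kernel-verified Lean document; each statement's English description precedes it below -/
import Mathlib

section
/- Let λ ≥ 0 be a real number and let g : V → ℝ be a function whose support set S(g) := {i ∈ V : g(i) > 0} is nonempty, and let g₊ be the positive part of g (g₊(i) = g(i) if g(i) > 0, else 0). If (Δg)(i) ≤ λ·g(i) for every i ∈ S(g), then λ ≥ ( (1/2)·∑_{i,j∈V} w_{ij}(g₊(i) − g₊(j))² ) / ( ∑_{i∈V} d_i g₊(i)² ). -/
open Finset

noncomputable section

namespace BJ

variable {V : Type*} [Fintype V] [DecidableEq V]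

/-- The degree `d_i = ∑_j w_ij` of a vertex. -/
def deg (w : V → V → ℝ) (i : V) : ℝ := ∑ j, w i j

/-- The volume `vol(A) = ∑_{i ∈ A} d_i` of a vertex subset. -/
def vol (w : V → V → ℝ) (A : Finset V) : ℝ := ∑ i ∈ A, deg w i

/-- The total edge weight `|E(A,B)| = ∑_{i ∈ A, j ∈ B} w_ij` between two vertex subsets. -/
def eW (w : V → V → ℝ) (A B : Finset V) : ℝ := ∑ i ∈ A, ∑ j ∈ B, w i j

/-- The normalized graph Laplacian `(Δu)(i) = u(i) - (1/d_i) ∑_j w_ij u(j)`. -/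
def lap (w : V → V → ℝ) (u : V → ℝ) (i : V) : ℝ :=
  u i - (1 / deg w i) * ∑ j, w i j * u j

/-- `lam` is an eigenvalue of the normalized graph Laplacian. -/
def IsEigen (w : V → V → ℝ) (lam : ℝ) : Prop :=
  ∃ u : V → ℝ, u ≠ 0 ∧ ∀ i, lap w u i = lam * u i

/-- The weighted graph is connected: any two vertices are joined by a chain of
positive-weight edges. -/
def Conn (w : V → V → ℝ) : Prop :=
  ∀ i j : V, Relation.ReflTransGen (fun a b => 0 < w a b) i j

/-- The weighted graph is bipartite: the vertex set splits into two nonempty classes with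
no edges inside a class. -/
def Bipartite (w : V → V → ℝ) : Prop :=
  ∃ A : Finset V, A.Nonempty ∧ Aᶜ.Nonempty ∧
    (∀ i ∈ A, ∀ j ∈ A, w i j = 0) ∧ (∀ i ∈ Aᶜ, ∀ j ∈ Aᶜ, w i j = 0)

/-- The Cheeger constant
`h = min { |E(U,Uᶜ)| / vol(U) : ∅ ≠ U ⊊ V, vol(U) ≤ vol(V)/2 }`. -/
def cheeger (w : V → V → ℝ) : ℝ :=
  sInf { r : ℝ | ∃ U : Finset V, U.Nonempty ∧ U ≠ Finset.univ ∧
    vol w U ≤ vol w Finset.univ / 2 ∧ r = eW w U Uᶜ / vol w U }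

/-- The dual Cheeger constant
`h̄ = max { 2|E(V₁,V₂)| / (vol(V₁)+vol(V₂)) }` over pairs of disjoint nonempty vertex sets
`V₁, V₂` (the third class `V₃` of the partition being the complement of `V₁ ∪ V₂`). -/
def dualCheeger (w : V → V → ℝ) : ℝ :=
  sSup { r : ℝ | ∃ V1 V2 : Finset V, V1.Nonempty ∧ V2.Nonempty ∧ Disjoint V1 V2 ∧
    r = 2 * eW w V1 V2 / (vol w V1 + vol w V2) }

/-- The weights of the neighborhood graph `Γ[l]`:
`w_ij[l] = ∑_{k₁,…,k_{l-1}} w_{i k₁} w_{k₁ k₂} ⋯ w_{k_{l-1} j} / (d_{k₁} ⋯ d_{k_{l-1}})`,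
defined recursively (as a matrix, `wl w l = D ⬝ P^l`; in particular `wl w 1 = w`). -/
def wl (w : V → V → ℝ) : ℕ → V → V → ℝ
  | 0 => fun i j => if i = j then deg w i else 0
  | n + 1 => fun i j => ∑ k, wl w n i k * w k j / deg w k

/-!
By Green's formula the Dirichlet energy of `g₊` is `∑_i d_i g₊(i) (Δg₊)(i)`, and only vertices of
`S(g)` contribute. At such a vertex `g₊` agrees with `g`, while `g₊ ≥ g` everywhere, so passing from
`g` to `g₊` can only lower the Laplacian: `(Δg₊)(i) ≤ (Δg)(i) ≤ λ g₊(i)`. Summing bounds the energy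
by `λ` times the weighted squared norm of `g₊`.
-/

/-- The Dirichlet energy `½ ∑_{i,j} w_ij (u(i) - u(j))²`, the numerator of the Rayleigh quotient.
Every unordered pair of vertices occurs twice in the double sum, hence the factor `½`. -/
def dirichletEnergy (w : V → V → ℝ) (u : V → ℝ) : ℝ :=
  (1 / 2) * ∑ i, ∑ j, w i j * (u i - u j) ^ 2

/-- The squared norm `∑_i d_i u(i)²` of `u` in the `ℓ²` space weighted by the degrees, in which the
Laplacian is self-adjoint. -/
def degNormSq (w : V → V → ℝ) (u : V → ℝ) : ℝ := ∑ i, deg w i * u i ^ 2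

/-- The Rayleigh quotient of the normalized Laplacian at `u`. It has the junk value `0` when the
weighted norm of `u` vanishes. -/
def rayleighQuotient (w : V → V → ℝ) (u : V → ℝ) : ℝ := dirichletEnergy w u / degNormSq w u

section

omit [DecidableEq V]

variable {w : V → V → ℝ} {u v g : V → ℝ} {lam : ℝ} {i : V}

theorem deg_mul_lap (hdeg : deg w i ≠ 0) (u : V → ℝ) :
    deg w i * lap w u i = ∑ j, w i j * (u i - u j) := by
  calc deg w i * lap w u i = deg w i * u i - ∑ j, w i j * u j := by
        rw [lap]
        field_simp
    _ = ∑ j, w i j * (u i - u j) := by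
        simp only [deg, mul_sub, sum_sub_distrib, sum_mul]

theorem sum_sum_mul_sub_mul_sub (hsym : ∀ i j, w i j = w j i) (u v : V → ℝ) :
    ∑ i, ∑ j, w i j * ((u i - u j) * (v i - v j)) =
      2 * ∑ i, ∑ j, u i * (w i j * (v i - v j)) := by
  have swap : ∑ i, ∑ j, u j * (w i j * (v j - v i)) = ∑ i, ∑ j, u i * (w i j * (v i - v j)) := by
    rw [sum_comm]
    exact sum_congr rfl fun i _ => sum_congr rfl fun j _ => by rw [hsym j i]
  calc ∑ i, ∑ j, w i j * ((u i - u j) * (v i - v j))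
      = ∑ i, ∑ j, (u i * (w i j * (v i - v j)) + u j * (w i j * (v j - v i))) :=
        sum_congr rfl fun i _ => sum_congr rfl fun j _ => by ring
    _ = 2 * ∑ i, ∑ j, u i * (w i j * (v i - v j)) := by
        simp only [sum_add_distrib]
        rw [swap, two_mul]

theorem green_identity (hsym : ∀ i j, w i j = w j i) (hdeg : ∀ i, deg w i ≠ 0) (u v : V → ℝ) :
    (1 / 2) * ∑ i, ∑ j, w i j * ((u i - u j) * (v i - v j)) =
      ∑ i, deg w i * (u i * lap w v i) := by
  calc (1 / 2) * ∑ i, ∑ j, w i j * ((u i - u j) * (v i - v j))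
      = ∑ i, ∑ j, u i * (w i j * (v i - v j)) := by
        rw [sum_sum_mul_sub_mul_sub hsym]
        ring
    _ = ∑ i, deg w i * (u i * lap w v i) :=
        sum_congr rfl fun i _ => by rw [mul_left_comm, deg_mul_lap (hdeg i), mul_sum]

theorem dirichletEnergy_eq_sum_mul_lap (hsym : ∀ i j, w i j = w j i) (hdeg : ∀ i, deg w i ≠ 0)
    (u : V → ℝ) : dirichletEnergy w u = ∑ i, deg w i * (u i * lap w u i) := by
  simp only [dirichletEnergy, sq, green_identity hsym hdeg]

theorem dirichletEnergy_le_mul_degNormSq (hsym : ∀ i j, w i j = w j i) (hdeg : ∀ i, 0 < deg w i)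
    (hu : ∀ i, u i * lap w u i ≤ lam * u i ^ 2) :
    dirichletEnergy w u ≤ lam * degNormSq w u := by
  calc dirichletEnergy w u = ∑ i, deg w i * (u i * lap w u i) :=
        dirichletEnergy_eq_sum_mul_lap hsym (fun i => (hdeg i).ne') u
    _ ≤ ∑ i, deg w i * (lam * u i ^ 2) :=
        sum_le_sum fun i _ => mul_le_mul_of_nonneg_left (hu i) (hdeg i).le
    _ = lam * degNormSq w u := by
        simp only [degNormSq, mul_sum, mul_left_comm lam]

theorem degNormSq_pos (hdeg : ∀ i, 0 < deg w i) (hu : u ≠ 0) : 0 < degNormSq w u := by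
  obtain ⟨k, hk⟩ := Function.ne_iff.mp hu
  exact sum_pos' (fun i _ => mul_nonneg (hdeg i).le (sq_nonneg _))
    ⟨k, mem_univ k, mul_pos (hdeg k) (sq_pos_of_ne_zero hk)⟩

theorem lap_le_lap_of_le_of_eq (hnn : ∀ j, 0 ≤ w i j) (huv : u ≤ v) (hi : u i = v i) :
    lap w v i ≤ lap w u i := by
  have hdeg : 0 ≤ deg w i := sum_nonneg fun j _ => hnn j
  have hsum : ∑ j, w i j * u j ≤ ∑ j, w i j * v j :=
    sum_le_sum fun j _ => mul_le_mul_of_nonneg_left (huv j) (hnn j)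
  rw [lap, lap, hi]
  gcongr

theorem posPart_mul_lap_posPart_le (hnn : ∀ j, 0 ≤ w i j)
    (hsub : 0 < g i → lap w g i ≤ lam * g i) :
    g⁺ i * lap w g⁺ i ≤ lam * g⁺ i ^ 2 := by
  rcases lt_or_ge 0 (g i) with hpos | hnonpos
  · have hgi : g⁺ i = g i := posPart_of_nonneg hpos.le
    have hlap : lap w g⁺ i ≤ lam * g i :=
      (lap_le_lap_of_le_of_eq hnn (le_posPart g) hgi.symm).trans (hsub hpos)
    calc g⁺ i * lap w g⁺ i = g i * lap w g⁺ i := by rw [hgi]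
      _ ≤ g i * (lam * g i) := mul_le_mul_of_nonneg_left hlap hpos.le
      _ = lam * g⁺ i ^ 2 := by rw [hgi]; ring
  · have hgi : g⁺ i = 0 := posPart_of_nonpos hnonpos
    simp [hgi]

theorem rayleigh_of_positive_part_le_lambda_general (hsym : ∀ i j, w i j = w j i)
    (hnn : ∀ i j, 0 ≤ w i j) (hdeg : ∀ i, 0 < deg w i) (hSg : ∃ i, 0 < g i)
    (hsub : ∀ i, 0 < g i → lap w g i ≤ lam * g i) :
    rayleighQuotient w g⁺ ≤ lam := by
  have hne : g⁺ ≠ 0 := by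
    obtain ⟨k, hk⟩ := hSg
    exact fun h => hk.not_ge (posPart_eq_zero.mp h k)
  rw [rayleighQuotient, div_le_iff₀ (degNormSq_pos hdeg hne)]
  exact dirichletEnergy_le_mul_degNormSq hsym hdeg fun i =>
    posPart_mul_lap_posPart_le (hnn i) (hsub i)

end

/-- Lemma 2.
If `λ ≥ 0` and `(Δg)(i) ≤ λ g(i)` on the (nonempty) support `S(g) = {i : g(i) > 0}`,
then `λ ≥ (½ ∑_{i,j} w_ij (g₊(i)-g₊(j))²) / (∑_i d_i g₊(i)²)`, where `g₊` is the
positive part of `g`. -/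
theorem rayleigh_of_positive_part_le_lambda
    (w : V → V → ℝ)
    (hsym : ∀ i j, w i j = w j i) (hnn : ∀ i j, 0 ≤ w i j)
    (hdeg : ∀ i, 0 < deg w i) (hconn : Conn w) (hN : 2 ≤ Fintype.card V)
    (lam : ℝ) (hlam : 0 ≤ lam)
    (g : V → ℝ) (hSg : ∃ i, 0 < g i)
    (gp : V → ℝ) (hgp : ∀ i, gp i = max (g i) 0)
    (hsub : ∀ i, 0 < g i → lap w g i ≤ lam * g i) :
    ((1 / 2) * ∑ i, ∑ j, w i j * (gp i - gp j) ^ 2) / (∑ i, deg w i * gp i ^ 2) ≤ lam := by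
  obtain rfl : gp = g⁺ := funext hgp
  exact rayleigh_of_positive_part_le_lambda_general hsym hnn hdeg hSg hsub

end BJ
end
end

section
/- If Γ is loopless, i.e. w_{ii} = 0 for every vertex i ∈ V, then the dual Cheeger constant satisfies 1/2 ≤ h̄. -/
open Finset

noncomputable section

namespace BJ

variable {V : Type*} [Fintype V] [DecidableEq V]

/-!
Adding the vertices one at a time, each to the side with which it shares less weight, splits `V`
into two sides such that, loops aside, no more weight stays inside the sides than runs between them.
So at least half of the non-loop weight runs between the sides, and at least a quarter of it in one
of the two directions (for symmetric `w`, in both). As `vol(V)` is the total weight, the quotient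
`2|E(V₁,V₂)| / vol(V)` of this cut is at least `1/2` when there are no loops.
-/

section EdgeWeight

variable {α : Type*} {w : α → α → ℝ} {A B C : Finset α} {a : α}

lemma eW_nonneg (hnn : ∀ i j, 0 ≤ w i j) (A B : Finset α) : 0 ≤ eW w A B :=
  sum_nonneg fun i _ ↦ sum_nonneg fun j _ ↦ hnn i j

lemma eW_singleton_singleton (i j : α) : eW w {i} {j} = w i j := by
  simp [eW]

variable [DecidableEq α]

lemma eW_union_left (hAB : Disjoint A B) : eW w (A ∪ B) C = eW w A C + eW w B C :=
  sum_union hAB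

lemma eW_union_right (hAB : Disjoint A B) : eW w C (A ∪ B) = eW w C A + eW w C B := by
  simp only [eW, sum_union hAB, sum_add_distrib]

lemma eW_insert_left (ha : a ∉ A) : eW w (insert a A) B = eW w {a} B + eW w A B :=
  eW_union_left (disjoint_singleton_left.mpr ha)

lemma eW_insert_right (ha : a ∉ B) : eW w A (insert a B) = eW w A {a} + eW w A B :=
  eW_union_right (disjoint_singleton_left.mpr ha)

lemma eW_insert_self (ha : a ∉ A) :
    eW w (insert a A) (insert a A) = w a a + (eW w {a} A + eW w A {a}) + eW w A A := by
  rw [eW_insert_left ha, eW_insert_right ha, eW_insert_right ha, eW_singleton_singleton]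
  ring

variable (w)

lemma exists_eW_self_add_eW_self_le (S : Finset α) :
    ∃ A B : Finset α, Disjoint A B ∧ A ∪ B = S ∧
      eW w A A + eW w B B ≤ eW w A B + eW w B A + ∑ i ∈ S, w i i := by
  induction S using Finset.induction_on with
  | empty => exact ⟨∅, ∅, disjoint_empty_left _, union_empty _, by simp [eW]⟩
  | insert a S haS ih =>
    obtain ⟨A, B, hAB, rfl, hcut⟩ := ih
    wlog hle : eW w {a} A + eW w A {a} ≤ eW w {a} B + eW w B {a} generalizing A B
    · rw [union_comm] at haS hcut ⊢
      exact this B A hAB.symm haS (by linarith) (le_of_not_ge hle)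
    obtain ⟨haA, haB⟩ := notMem_union.mp haS
    refine ⟨insert a A, B, disjoint_insert_left.mpr ⟨haB, hAB⟩, insert_union a A B, ?_⟩
    rw [eW_insert_self haA, eW_insert_left haA, eW_insert_right haA, sum_insert haS]
    linarith

lemma exists_eW_self_le_four_mul_eW (S : Finset α) :
    ∃ A B : Finset α, Disjoint A B ∧ A ∪ B = S ∧
      eW w S S ≤ 4 * eW w A B + ∑ i ∈ S, w i i := by
  obtain ⟨A, B, hAB, rfl, hcut⟩ := exists_eW_self_add_eW_self_le w S
  wlog hdir : eW w B A ≤ eW w A B generalizing A B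
  · rw [union_comm] at hcut ⊢
    exact this B A hAB.symm (by linarith) (le_of_not_ge hdir)
  refine ⟨A, B, hAB, rfl, ?_⟩
  rw [eW_union_left hAB, eW_union_right hAB, eW_union_right hAB]
  linarith

end EdgeWeight

section Volume

variable {α : Type*} [Fintype α] {w : α → α → ℝ}

lemma vol_union [DecidableEq α] {A B : Finset α} (hAB : Disjoint A B) :
    vol w (A ∪ B) = vol w A + vol w B :=
  sum_union hAB

lemma vol_univ : vol w univ = eW w univ univ := rfl

lemma vol_nonneg (hnn : ∀ i j, 0 ≤ w i j) (A : Finset α) : 0 ≤ vol w A :=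
  eW_nonneg hnn A univ

lemma eW_le_vol (hnn : ∀ i j, 0 ≤ w i j) (A B : Finset α) : eW w A B ≤ vol w A :=
  sum_le_sum fun i _ ↦ sum_le_univ_sum_of_nonneg (hnn i)

lemma two_mul_eW_div_le_two (hnn : ∀ i j, 0 ≤ w i j) (A B : Finset α) :
    2 * eW w A B / (vol w A + vol w B) ≤ 2 := by
  have hA := vol_nonneg hnn A
  have hB := vol_nonneg hnn B
  have hle := eW_le_vol hnn A B
  exact div_le_of_le_mul₀ (by linarith) (by norm_num) (by linarith)

lemma dualCheeger_nonneg (hnn : ∀ i j, 0 ≤ w i j) : 0 ≤ dualCheeger w := by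
  apply Real.sSup_nonneg
  rintro _ ⟨A, B, -, -, -, rfl⟩
  have hA := vol_nonneg hnn A
  have hB := vol_nonneg hnn B
  have hE := eW_nonneg hnn A B
  positivity

lemma two_mul_eW_div_le_dualCheeger (hnn : ∀ i j, 0 ≤ w i j) {A B : Finset α}
    (hAB : Disjoint A B) : 2 * eW w A B / (vol w A + vol w B) ≤ dualCheeger w := by
  rcases A.eq_empty_or_nonempty with rfl | hA
  · simpa [eW] using dualCheeger_nonneg hnn
  rcases B.eq_empty_or_nonempty with rfl | hB
  · simpa [eW] using dualCheeger_nonneg hnn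
  refine le_csSup ⟨2, ?_⟩ ⟨A, B, hA, hB, hAB, rfl⟩
  rintro _ ⟨A', B', -, -, -, rfl⟩
  exact two_mul_eW_div_le_two hnn A' B'

end Volume

theorem one_half_le_dualCheeger_of_loopless_general {α : Type*} [Fintype α] {w : α → α → ℝ}
    (hnn : ∀ i j, 0 ≤ w i j) (hloops : ∑ i, w i i < vol w univ) :
    (1 - (∑ i, w i i) / vol w univ) / 2 ≤ dualCheeger w := by
  classical
  obtain ⟨A, B, hAB, hunion, hcut⟩ := exists_eW_self_le_four_mul_eW w univ
  rw [← vol_univ] at hcut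
  have hvol : 0 < vol w univ := (sum_nonneg fun i _ ↦ hnn i i).trans_lt hloops
  calc (1 - (∑ i, w i i) / vol w univ) / 2
      = (vol w univ - ∑ i, w i i) / 2 / vol w univ := by field_simp
    _ ≤ 2 * eW w A B / vol w univ := by gcongr; linarith
    _ = 2 * eW w A B / (vol w A + vol w B) := by rw [← vol_union hAB, hunion]
    _ ≤ dualCheeger w := two_mul_eW_div_le_dualCheeger hnn hAB

/-- Proposition: lower bound for the dual Cheeger constant.
For a loopless graph (`w_ii = 0` for all `i`), `1/2 ≤ h̄`. -/
theorem one_half_le_dualCheeger_of_loopless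
    (w : V → V → ℝ)
    (hsym : ∀ i j, w i j = w j i) (hnn : ∀ i j, 0 ≤ w i j)
    (hdeg : ∀ i, 0 < deg w i) (hconn : Conn w) (hN : 2 ≤ Fintype.card V)
    (hloop : ∀ i, w i i = 0) :
    1 / 2 ≤ dualCheeger w := by
  have : Nonempty V := Fintype.card_pos_iff.mp (by lia)
  have hvol : 0 < vol w univ := sum_pos (fun i _ ↦ hdeg i) univ_nonempty
  simpa [hloop] using one_half_le_dualCheeger_of_loopless_general hnn (by simpa [hloop] using hvol)

end BJ
end
end

section
/- Suppose that for every vertex i ∈ V there is a closed walk σ_i in Γ from i to i consisting of an odd number of edges (each consecutive pair in the walk being joined by an edge of positive weight), and let Σ = (σ_i)_{i∈V} be this collection. Define ξ := max over edges e = (k,l) with w_{kl} > 0 of (1/w_{kl})·∑_{i : σ_i contains the edge e} d_i. Then the dual Cheeger constant satisfies h̄ ≤ 1 − 1/ξ. -/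
open Finset

noncomputable section

namespace BJ

variable {V : Type*} [Fintype V] [DecidableEq V]

/-!
Call an ordered pair `(k, l)` noncrossing for disjoint vertex sets `A`, `B` if it leads from `A`
to the complement of `B` or from `B` to the complement of `A`. The noncrossing pairs have total
weight `vol A + vol B - 2 |E(A, B)|`. A walk without noncrossing steps that starts in `A ∪ B`
alternates between `A` and `B`, so an odd closed walk based in `A ∪ B` has a noncrossing step.
Charging `d_i` to such a step of `σ_i` gives
`vol A + vol B ≤ ∑ load(e) ≤ ξ ∑ w(e) = ξ (vol A + vol B - 2 |E(A, B)|)`, both sums running over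
the noncrossing pairs `e`.
-/

lemma eW_comm {α : Type*} {w : α → α → ℝ} (hsym : ∀ i j, w i j = w j i) (A B : Finset α) :
    eW w A B = eW w B A :=
  sum_comm.trans (sum_congr rfl fun _ _ => sum_congr rfl fun _ _ => hsym _ _)

section Volume

variable {α : Type*} [Fintype α] {w : α → α → ℝ}

lemma deg_nonneg (hnn : ∀ i j, 0 ≤ w i j) : 0 ≤ deg w :=
  fun i => sum_nonneg fun j _ => hnn i j

lemma eW_add_eW_compl [DecidableEq α] (w : α → α → ℝ) (A B : Finset α) :
    eW w A B + eW w A Bᶜ = vol w A := by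
  simp only [eW, vol, deg, ← sum_add_distrib, sum_add_sum_compl]

end Volume

section NoncrossingPairs

variable {α : Type*} [Fintype α] [DecidableEq α]

/-- The ordered pairs, loops included, that start in `A ∪ B` but do not lead from one of `A`, `B`
to the other. They index the edge weight lost by the cut `(A, B)`, an edge inside `A` or inside
`B` being counted in both directions. -/
def noncrossing (A B : Finset α) : Finset (α × α) := A ×ˢ Bᶜ ∪ B ×ˢ Aᶜ

lemma mem_noncrossing {A B : Finset α} {k l : α} :
    (k, l) ∈ noncrossing A B ↔ k ∈ A ∧ l ∉ B ∨ k ∈ B ∧ l ∉ A := by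
  simp [noncrossing]

lemma noncrossing_comm (A B : Finset α) : noncrossing A B = noncrossing B A :=
  union_comm _ _

lemma mem_of_forall_step_notMem_noncrossing {A B : Finset α} {p : ℕ → α} (h0 : p 0 ∈ A) {n : ℕ}
    (hp : ∀ t < n, (p t, p (t + 1)) ∉ noncrossing A B) :
    (Even n → p n ∈ A) ∧ (Odd n → p n ∈ B) := by
  induction n with
  | zero => simpa using h0
  | succ n ih =>
    obtain ⟨mem_of_even, mem_of_odd⟩ := ih fun t ht => hp t (ht.trans n.lt_succ_self)
    have hstep := hp n n.lt_succ_self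
    rw [mem_noncrossing] at hstep
    push Not at hstep
    rw [Nat.even_add_one, Nat.odd_add_one, Nat.not_even_iff_odd, Nat.not_odd_iff_even]
    exact ⟨fun h => hstep.2 (mem_of_odd h), fun h => hstep.1 (mem_of_even h)⟩

lemma exists_step_mem_noncrossing {A B : Finset α} (hAB : Disjoint A B) {p : ℕ → α} {n : ℕ}
    (hn : Odd n) (hclosed : p n = p 0) (h0 : p 0 ∈ A ∪ B) :
    ∃ t < n, (p t, p (t + 1)) ∈ noncrossing A B := by
  wlog h0A : p 0 ∈ A generalizing A B
  · rw [noncrossing_comm]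
    exact this hAB.symm (union_comm A B ▸ h0) ((mem_union.mp h0).resolve_left h0A)
  by_contra! hp
  have h0B : p 0 ∈ B := hclosed ▸ (mem_of_forall_step_notMem_noncrossing h0A hp).2 hn
  exact disjoint_left.mp hAB h0A h0B

lemma sum_noncrossing {w : α → α → ℝ} (hsym : ∀ i j, w i j = w j i) {A B : Finset α}
    (hAB : Disjoint A B) :
    ∑ e ∈ noncrossing A B, w e.1 e.2 = vol w A + vol w B - 2 * eW w A B := by
  have hsum : ∑ e ∈ noncrossing A B, w e.1 e.2 = eW w A Bᶜ + eW w B Aᶜ := by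
    rw [noncrossing, sum_union (disjoint_product.mpr (.inl hAB)), sum_product, sum_product, eW, eW]
  linarith [eW_comm hsym A B, eW_add_eW_compl w A B, eW_add_eW_compl w B A]

end NoncrossingPairs

lemma two_mul_eW_le_vol_add_vol {α : Type*} [Fintype α] {w : α → α → ℝ}
    (hsym : ∀ i j, w i j = w j i) (hnn : ∀ i j, 0 ≤ w i j) {A B : Finset α}
    (hAB : Disjoint A B) : 2 * eW w A B ≤ vol w A + vol w B := by
  classical
  rw [← sub_nonneg, ← sum_noncrossing hsym hAB]
  exact sum_nonneg fun e _ => hnn e.1 e.2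

lemma sum_le_sum_sum_indicator_of_forall_exists_mem {ι κ M : Type*} [Fintype ι]
    [AddCommMonoid M] [PartialOrder M] [IsOrderedAddMonoid M] {f : ι → M} (hf : 0 ≤ f)
    {s : Finset ι} {F : Finset κ} {S : κ → Set ι} (hcover : ∀ i ∈ s, ∃ e ∈ F, i ∈ S e) :
    ∑ i ∈ s, f i ≤ ∑ e ∈ F, ∑ i, (S e).indicator f i := by
  have hind (i : ι) (e : κ) : 0 ≤ (S e).indicator f i := Set.indicator_nonneg (fun j _ => hf j) i
  calc ∑ i ∈ s, f i ≤ ∑ i ∈ s, ∑ e ∈ F, (S e).indicator f i := by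
        refine sum_le_sum fun i hi => ?_
        obtain ⟨e, heF, hie⟩ := hcover i hi
        rw [← Set.indicator_of_mem hie f]
        exact single_le_sum (f := fun e => (S e).indicator f i) (fun e _ => hind i e) heF
    _ ≤ ∑ i, ∑ e ∈ F, (S e).indicator f i :=
        sum_le_univ_sum_of_nonneg fun i => sum_nonneg fun e _ => hind i e
    _ = ∑ e ∈ F, ∑ i, (S e).indicator f i := sum_comm

section Walks

variable {α : Type*}

/-- The vertices `p 0, …, p n` form a closed walk based at `i`, with an odd number `n` of steps
along edges of positive weight. The values of `p` beyond `n` are irrelevant. -/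
structure IsOddClosedWalk (w : α → α → ℝ) (i : α) (p : ℕ → α) (n : ℕ) : Prop where
  odd : Odd n
  start : p 0 = i
  finish : p n = i
  step_pos : ∀ t < n, 0 < w (p t) (p (t + 1))

/-- The walk `p 0, …, p n` contains the undirected edge joining `k` and `l`. -/
def Traverses (p : ℕ → α) (n : ℕ) (k l : α) : Prop :=
  ∃ t < n, (p t = k ∧ p (t + 1) = l) ∨ (p t = l ∧ p (t + 1) = k)

lemma Traverses.weight_pos {w : α → α → ℝ} (hsym : ∀ i j, w i j = w j i) {p : ℕ → α} {n : ℕ}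
    (hp : ∀ t < n, 0 < w (p t) (p (t + 1))) {k l : α} (h : Traverses p n k l) : 0 < w k l := by
  obtain ⟨t, ht, ⟨rfl, rfl⟩ | ⟨rfl, rfl⟩⟩ := h
  · exact hp t ht
  · exact hsym _ _ ▸ hp t ht

lemma IsOddClosedWalk.deg_pos [Fintype α] {w : α → α → ℝ} (hnn : ∀ i j, 0 ≤ w i j) {i : α}
    {p : ℕ → α} {n : ℕ} (h : IsOddClosedWalk w i p n) : 0 < deg w i :=
  sum_pos' (fun j _ => hnn i j) ⟨p 1, mem_univ _, h.start ▸ h.step_pos 0 h.odd.pos⟩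

end Walks

section Congestion

variable {α : Type*} [Fintype α]

/-- The load `∑_{i : σ_i ∋ (k, l)} d_i` that a family of walks, one per vertex, puts on the edge
joining `k` and `l` when the walk `σ i` carries the amount `d_i`. -/
def edgeLoad (w : α → α → ℝ) (σ : α → ℕ → α) (len : α → ℕ) (k l : α) : ℝ :=
  ∑ i, Set.indicator {i | Traverses (σ i) (len i) k l} (deg w) i

/-- The quantity `ξ` of a family of walks: the maximal load of an edge relative to its weight,
written as the supremum of a finite set (with junk value `0` if no weight is positive). -/
def congestion (w : α → α → ℝ) (σ : α → ℕ → α) (len : α → ℕ) : ℝ :=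
  sSup {x | ∃ k l, 0 < w k l ∧ x = (1 / w k l) * edgeLoad w σ len k l}

variable {w : α → α → ℝ} {σ : α → ℕ → α} {len : α → ℕ}

lemma one_div_mul_edgeLoad_le_congestion {k l : α} (hkl : 0 < w k l) :
    (1 / w k l) * edgeLoad w σ len k l ≤ congestion w σ len := by
  refine le_csSup (Set.Finite.bddAbove ?_) ⟨k, l, hkl, rfl⟩
  refine (Set.finite_range fun e : α × α => (1 / w e.1 e.2) * edgeLoad w σ len e.1 e.2).subset ?_
  rintro _ ⟨k, l, -, rfl⟩
  exact ⟨(k, l), rfl⟩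

lemma edgeLoad_eq_zero (hsym : ∀ i j, w i j = w j i)
    (hσ : ∀ i, ∀ t < len i, 0 < w (σ i t) (σ i (t + 1))) {k l : α} (hkl : w k l = 0) :
    edgeLoad w σ len k l = 0 := by
  refine sum_eq_zero fun i _ => Set.indicator_of_notMem ?_ _
  intro (htraverses : Traverses (σ i) (len i) k l)
  exact (htraverses.weight_pos hsym (hσ i)).ne' hkl

lemma edgeLoad_le_congestion_mul (hsym : ∀ i j, w i j = w j i) (hnn : ∀ i j, 0 ≤ w i j)
    (hσ : ∀ i, ∀ t < len i, 0 < w (σ i t) (σ i (t + 1))) (k l : α) :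
    edgeLoad w σ len k l ≤ congestion w σ len * w k l := by
  rcases (hnn k l).eq_or_lt' with hzero | hpos
  · rw [edgeLoad_eq_zero hsym hσ hzero, hzero, mul_zero]
  · have hle := one_div_mul_edgeLoad_le_congestion (σ := σ) (len := len) hpos
    rwa [one_div_mul_eq_div, div_le_iff₀ hpos] at hle

lemma vol_add_vol_le_congestion_mul (hsym : ∀ i j, w i j = w j i) (hnn : ∀ i j, 0 ≤ w i j)
    (hσ : ∀ i, IsOddClosedWalk w i (σ i) (len i)) {A B : Finset α} (hAB : Disjoint A B) :
    vol w A + vol w B ≤ congestion w σ len * (vol w A + vol w B - 2 * eW w A B) := by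
  classical
  have hcover (i : α) (hi : i ∈ A ∪ B) :
      ∃ e ∈ noncrossing A B, i ∈ {i | Traverses (σ i) (len i) e.1 e.2} := by
    obtain ⟨t, ht, hmem⟩ := exists_step_mem_noncrossing hAB (hσ i).odd
      ((hσ i).finish.trans (hσ i).start.symm) ((hσ i).start.symm ▸ hi)
    exact ⟨_, hmem, t, ht, .inl ⟨rfl, rfl⟩⟩
  calc vol w A + vol w B = ∑ i ∈ A ∪ B, deg w i := (sum_union hAB).symm
    _ ≤ ∑ e ∈ noncrossing A B, edgeLoad w σ len e.1 e.2 :=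
        sum_le_sum_sum_indicator_of_forall_exists_mem (deg_nonneg hnn) hcover
    _ ≤ ∑ e ∈ noncrossing A B, congestion w σ len * w e.1 e.2 :=
        sum_le_sum fun e _ => edgeLoad_le_congestion_mul hsym hnn (fun i => (hσ i).step_pos) e.1 e.2
    _ = congestion w σ len * (vol w A + vol w B - 2 * eW w A B) := by
        rw [← mul_sum, sum_noncrossing hsym hAB]

lemma two_mul_eW_div_le_one_sub_one_div_congestion (hsym : ∀ i j, w i j = w j i)
    (hnn : ∀ i j, 0 ≤ w i j) (hσ : ∀ i, IsOddClosedWalk w i (σ i) (len i)) {A B : Finset α}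
    (hA : A.Nonempty) (hAB : Disjoint A B) :
    2 * eW w A B / (vol w A + vol w B) ≤ 1 - 1 / congestion w σ len := by
  have hvol : 0 < vol w A + vol w B :=
    add_pos_of_pos_of_nonneg (sum_pos (fun i _ => (hσ i).deg_pos hnn) hA) (vol_nonneg hnn B)
  have hload := vol_add_vol_le_congestion_mul hsym hnn hσ hAB
  have hcongestion : 0 < congestion w σ len := pos_of_mul_pos_left (hvol.trans_le hload)
    (sub_nonneg.mpr (two_mul_eW_le_vol_add_vol hsym hnn hAB))
  rw [le_sub_comm, one_sub_div hvol.ne', div_le_div_iff₀ hcongestion hvol]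
  linarith

end Congestion

lemma dualCheeger_le {α : Type*} [Fintype α] (hN : 2 ≤ Fintype.card α) {w : α → α → ℝ} {b : ℝ}
    (h : ∀ A B : Finset α, A.Nonempty → B.Nonempty → Disjoint A B →
      2 * eW w A B / (vol w A + vol w B) ≤ b) :
    dualCheeger w ≤ b := by
  obtain ⟨i, j, hij⟩ := Fintype.one_lt_card_iff.mp hN
  refine csSup_le ⟨_, {i}, {j}, singleton_nonempty i, singleton_nonempty j,
    disjoint_singleton.mpr hij, rfl⟩ ?_
  rintro _ ⟨A, B, hA, hB, hAB, rfl⟩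
  exact h A B hA hB hAB

theorem dualCheeger_le_of_odd_closed_walks_general {α : Type*} [Fintype α] (w : α → α → ℝ)
    (hsym : ∀ i j, w i j = w j i) (hnn : ∀ i j, 0 ≤ w i j) (hN : 2 ≤ Fintype.card α)
    (σ : α → ℕ → α) (len : α → ℕ) (hσ : ∀ i, IsOddClosedWalk w i (σ i) (len i)) :
    dualCheeger w ≤ 1 - 1 / congestion w σ len :=
  dualCheeger_le hN fun _ _ hA _ hAB =>
    two_mul_eW_div_le_one_sub_one_div_congestion hsym hnn hσ hA hAB

/-- Theorem: upper bound for the dual Cheeger constant via odd closed walks.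
If every vertex `i` carries a closed walk `σ_i` from `i` to `i` with an odd number of edges,
and `ξ = max_{e=(k,l)} (1/w_kl) ∑_{i : σ_i ∋ e} d_i`, then `h̄ ≤ 1 - 1/ξ`. -/
theorem dualCheeger_le_of_odd_closed_walks
    (w : V → V → ℝ)
    (hsym : ∀ i j, w i j = w j i) (hnn : ∀ i j, 0 ≤ w i j)
    (hdeg : ∀ i, 0 < deg w i) (hconn : Conn w) (hN : 2 ≤ Fintype.card V)
    (σ : V → ℕ → V) (σlen : V → ℕ)
    (hodd : ∀ i, Odd (σlen i))
    (hstart : ∀ i, σ i 0 = i) (hend : ∀ i, σ i (σlen i) = i)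
    (hstep : ∀ i, ∀ t < σlen i, 0 < w (σ i t) (σ i (t + 1)))
    (ξ : ℝ)
    (hξ : ξ = sSup { x : ℝ | ∃ k l : V, 0 < w k l ∧
        x = (1 / w k l) * ∑ i : V,
          Set.indicator
            {i : V | ∃ t < σlen i,
              (σ i t = k ∧ σ i (t + 1) = l) ∨ (σ i t = l ∧ σ i (t + 1) = k)}
            (deg w) i }) :
    dualCheeger w ≤ 1 - 1 / ξ := by
  subst hξ
  exact dualCheeger_le_of_odd_closed_walks_general w hsym hnn hN σ σlen
    fun i => ⟨hodd i, hstart i, hend i, hstep i⟩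

end BJ
end
end
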